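/- For all positive real numbers a, b and every integer k ≥ 1, |ψ_k(a) - ψ_k(a+b)| ≤ (k+1)!·min(a,b)·a^{-(k+1)}·(1 + 1/a). -/

import Mathlib

open MeasureTheory

/-- The polygamma function of order `n`: the `(n+1)`-st derivative of `log ∘ Γ`. -/
noncomputable def polygamma (n : ℕ) (z : ℝ) : ℝ :=
  iteratedDeriv (n + 1) (fun x => Real.log (Real.Gamma x)) z

open Filter Topology in
lemma pg_summable (j : ℕ) (hj : 2 ≤ j) (x : ℝ) (hx : 0 < x) :
    Summable (fun n : ℕ => ((x + n) ^ j)⁻¹) := by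
  have h := (Real.summable_one_div_nat_add_rpow x j).2 (by exact_mod_cast hj)
  refine h.congr fun n => ?_
  have : (0:ℝ) < n + x := by positivity
  rw [abs_of_pos this, Real.rpow_natCast, one_div, add_comm]

noncomputable def pgS (j : ℕ) (x : ℝ) : ℝ := ∑' n : ℕ, ((x + n) ^ j)⁻¹

lemma pg_term_deriv (j : ℕ) (x : ℝ) (hx : 0 < x) (n : ℕ) :
    HasDerivAt (fun y : ℝ => ((y + n) ^ j)⁻¹) (-(j * ((x + n) ^ (j + 1))⁻¹)) x := by
  have hp : (0:ℝ) < x + n := by positivity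
  have h := (((hasDerivAt_id x).add_const (n:ℝ)).fun_pow j).fun_inv (by simp only [id]; positivity)
  refine h.congr_deriv ?_
  simp only [id]
  rcases j with _ | j
  · simp
  · simp only [Nat.add_sub_cancel]
    field_simp
    ring

lemma pgS_deriv (j : ℕ) (hj : 2 ≤ j) (x : ℝ) (hx : 0 < x) :
    HasDerivAt (pgS j) (-(j * pgS (j + 1) x)) x := by
  have hs : Summable (fun n : ℕ => (j:ℝ) * ((x / 2 + n) ^ (j + 1))⁻¹) :=
    (pg_summable (j + 1) (by omega) (x / 2) (by positivity)).mul_left _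
  have h := hasDerivAt_tsum_of_isPreconnected (𝕜 := ℝ) (F := ℝ) (t := Set.Ioi (x / 2)) (y₀ := x)
    (y := x) (g := fun (n : ℕ) (y : ℝ) => ((y + n) ^ j)⁻¹)
    (g' := fun (n : ℕ) (y : ℝ) => -(j * ((y + n) ^ (j + 1))⁻¹)) hs isOpen_Ioi
    isPreconnected_Ioi ?_ ?_ (by simp [hx]) (pg_summable j hj x hx) (by simp [hx])
  · refine h.congr_deriv ?_
    rw [tsum_neg, tsum_mul_left, pgS]
  · intro n y hy
    have hy' : x / 2 < y := hy
    exact pg_term_deriv j y (by linarith) n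
  · intro n y hy
    have hy' : x / 2 < y := hy
    have hy0 : 0 < y := by linarith
    rw [norm_neg, Real.norm_of_nonneg (by positivity)]
    gcongr

noncomputable def pgU (n : ℕ) (x : ℝ) : ℝ :=
  x * (Real.log (n + 2) - Real.log (n + 1)) - (Real.log (x + (n + 1)) - Real.log (n + 1))

noncomputable def pgU' (n : ℕ) (x : ℝ) : ℝ :=
  (Real.log (n + 2) - Real.log (n + 1)) - (x + (n + 1))⁻¹

lemma pgU_deriv (n : ℕ) (x : ℝ) (hx : 0 < x) : HasDerivAt (pgU n) (pgU' n x) x := by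
  have hp : (0:ℝ) < x + (n + 1) := by positivity
  have h1 := ((hasDerivAt_id x).add_const ((n:ℝ) + 1)).log (by simp only [id]; positivity)
  have h2 := (((hasDerivAt_id x).mul_const (Real.log (n + 2) - Real.log (n + 1)))).sub
    (h1.sub_const (Real.log (n + 1)))
  refine h2.congr_deriv ?_
  simp [pgU']

lemma pgU'_deriv (n : ℕ) (x : ℝ) (hx : 0 < x) :
    HasDerivAt (pgU' n) (((x + (n + 1)) ^ 2)⁻¹) x := by
  have hp : (0:ℝ) < x + (n + 1) := by positivity
  have h1 := ((hasDerivAt_id x).add_const ((n:ℝ) + 1)).fun_inv (by simp only [id]; positivity)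
  have h2 := h1.const_sub (Real.log (n + 2) - Real.log (n + 1))
  refine h2.congr_deriv ?_
  simp only [id]
  field_simp

lemma pg_summable_sq : Summable (fun n : ℕ => (((n:ℝ) + 1) ^ 2)⁻¹) := by
  refine (pg_summable 2 le_rfl 1 one_pos).congr fun n => ?_
  rw [add_comm]

lemma pgU'_bound (M : ℝ) (hM : 1 ≤ M) (n : ℕ) (x : ℝ) (hx : 0 < x) (hxM : x < M) :
    ‖pgU' n x‖ ≤ M * (((n:ℝ) + 1) ^ 2)⁻¹ := by
  have hn : (0:ℝ) < (n:ℝ) + 1 := by positivity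
  have e : Real.log (n + 2) - Real.log (n + 1) = Real.log (((n:ℝ) + 2) / (n + 1)) := by
    rw [Real.log_div (by positivity) (by positivity)]
  have h1 := Real.one_sub_inv_le_log_of_pos (x := ((n:ℝ) + 2) / (n + 1)) (by positivity)
  have h2 := Real.log_le_sub_one_of_pos (x := ((n:ℝ) + 2) / (n + 1)) (by positivity)
  have e1 : 1 - (((n:ℝ) + 2) / (n + 1))⁻¹ = ((n:ℝ) + 2)⁻¹ := by field_simp; ring
  have e2 : ((n:ℝ) + 2) / (n + 1) - 1 = ((n:ℝ) + 1)⁻¹ := by field_simp; ring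
  have h3 : (x + ((n:ℝ) + 1))⁻¹ ≤ ((n:ℝ) + 1)⁻¹ :=
    inv_anti₀ hn (by linarith)
  have h4 : (M + ((n:ℝ) + 1))⁻¹ ≤ (x + ((n:ℝ) + 1))⁻¹ := by gcongr
  have h5 : (M + ((n:ℝ) + 1))⁻¹ ≤ ((n:ℝ) + 2)⁻¹ :=
    inv_anti₀ (by linarith) (by linarith)
  have h6 : ((n:ℝ) + 1)⁻¹ - (M + ((n:ℝ) + 1))⁻¹ ≤ M * (((n:ℝ) + 1) ^ 2)⁻¹ := by
    have : ((n:ℝ) + 1)⁻¹ - (M + ((n:ℝ) + 1))⁻¹ = M * (((n:ℝ) + 1) * (M + (n + 1)))⁻¹ := by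
      field_simp; ring
    rw [this]
    gcongr
    nlinarith
  rw [pgU', e, Real.norm_eq_abs, abs_le]
  rw [e1] at h1
  rw [e2] at h2
  constructor <;> linarith

lemma pgU_summable_one : Summable (fun n => pgU n 1) := by
  have : (fun n => pgU n 1) = fun _ => 0 := by
    funext n
    have : (1:ℝ) + (n + 1) = n + 2 := by ring
    simp [pgU, this]
  rw [this]
  exact summable_zero

lemma pgU_summable (x : ℝ) (hx : 0 < x) : Summable (fun n => pgU n x) :=
  summable_of_summable_hasDerivAt_of_isPreconnected (𝕜 := ℝ) (F := ℝ) (t := Set.Ioo 0 (x + 2))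
    (y₀ := 1) (g := pgU) (g' := pgU') (pg_summable_sq.mul_left (x + 2)) isOpen_Ioo
    isPreconnected_Ioo (fun n y hy => pgU_deriv n y hy.1)
    (fun n y hy => pgU'_bound (x + 2) (by linarith) n y hy.1 hy.2)
    ⟨one_pos, by linarith⟩ pgU_summable_one ⟨hx, by linarith⟩

lemma pgU_tsum_deriv (x : ℝ) (hx : 0 < x) :
    HasDerivAt (fun y => ∑' n, pgU n y) (∑' n, pgU' n x) x :=
  hasDerivAt_tsum_of_isPreconnected (𝕜 := ℝ) (F := ℝ) (t := Set.Ioo 0 (x + 2))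
    (y₀ := 1) (g := pgU) (g' := pgU') (pg_summable_sq.mul_left (x + 2)) isOpen_Ioo
    isPreconnected_Ioo (fun n y hy => pgU_deriv n y hy.1)
    (fun n y hy => pgU'_bound (x + 2) (by linarith) n y hy.1 hy.2)
    ⟨one_pos, by linarith⟩ pgU_summable_one ⟨hx, by linarith⟩

lemma pgU'_tsum_deriv (x : ℝ) (hx : 0 < x) :
    HasDerivAt (fun y => ∑' n, pgU' n y) (∑' n : ℕ, ((x + (n + 1)) ^ 2)⁻¹) x := by
  refine hasDerivAt_tsum_of_isPreconnected (𝕜 := ℝ) (F := ℝ) (t := Set.Ioi 0)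
    (y₀ := x) (g := pgU') (g' := fun (n : ℕ) y => ((y + (n + 1)) ^ 2)⁻¹) pg_summable_sq isOpen_Ioi
    isPreconnected_Ioi (fun n y hy => pgU'_deriv n y hy) ?_ hx ?_ hx
  · intro n y hy
    have hy' : 0 < y := hy
    rw [Real.norm_of_nonneg (by positivity)]
    have hle : (n:ℝ) + 1 ≤ y + (n + 1) := by linarith
    gcongr
  · exact Summable.of_norm_bounded (pg_summable_sq.mul_left (x + 1))
      (fun n => pgU'_bound (x + 1) (by linarith) n x hx (by linarith))

lemma pgU_partial (x : ℝ) (N : ℕ) :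
    ∑ n ∈ Finset.range N, pgU n x = Real.BohrMollerup.logGammaSeq x N + Real.log x
      + x * (Real.log (N + 1) - Real.log N) := by
  suffices h : ∑ n ∈ Finset.range N, pgU n x = x * Real.log (N + 1) + Real.log (N.factorial : ℝ)
      - ∑ m ∈ Finset.range N, Real.log (x + (m + 1)) by
    rw [h, Real.BohrMollerup.logGammaSeq, Finset.sum_range_succ']
    push_cast
    simp only [add_zero]
    ring
  induction N with
  | zero => simp
  | succ N ih =>
    rw [Finset.sum_range_succ, ih, Finset.sum_range_succ, Nat.factorial_succ, Nat.cast_mul,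
      Real.log_mul (by positivity) (by positivity), pgU]
    push_cast
    have : (N:ℝ) + 1 + 1 = N + 2 := by ring
    rw [this]
    ring

open Filter Topology in
lemma log_Gamma_eq (x : ℝ) (hx : 0 < x) :
    Real.log (Real.Gamma x) = ∑' n, pgU n x - Real.log x := by
  have h1 : Tendsto (fun N => ∑ n ∈ Finset.range N, pgU n x) atTop
      (𝓝 (Real.log (Real.Gamma x) + Real.log x + x * 0)) := by
    simp only [pgU_partial]
    exact ((Real.BohrMollerup.tendsto_log_gamma hx).add_const _).add
      (Real.tendsto_log_nat_add_one_sub_log.const_mul x)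
  have h2 := (pgU_summable x hx).hasSum.tendsto_sum_nat
  have := tendsto_nhds_unique h1 h2
  linarith

open Filter Topology in
lemma iter_log_Gamma (k : ℕ) : ∀ x : ℝ, 0 < x →
    iteratedDeriv (k + 2) (fun x => Real.log (Real.Gamma x)) x
      = (-1) ^ k * ((k + 1).factorial : ℝ) * pgS (k + 2) x := by
  induction k with
  | zero =>
    intro x hx
    have hd : ∀ y : ℝ, 0 < y → deriv (fun x => Real.log (Real.Gamma x)) y
        = ∑' n, pgU' n y - y⁻¹ := by
      intro y hy
      have h := (pgU_tsum_deriv y hy).sub (Real.hasDerivAt_log hy.ne')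
      refine (h.congr_of_eventuallyEq ?_).deriv
      filter_upwards [lt_mem_nhds hy] with z hz using log_Gamma_eq z hz
    rw [iteratedDeriv_succ, zero_add, iteratedDeriv_one]
    have h := (pgU'_tsum_deriv x hx).sub (hasDerivAt_inv hx.ne')
    have h' := h.congr_of_eventuallyEq (f₁ := deriv (fun x => Real.log (Real.Gamma x))) (by
      filter_upwards [lt_mem_nhds hx] with z hz using hd z hz)
    rw [h'.deriv, pgS, (pg_summable 2 le_rfl x hx).tsum_eq_zero_add]
    simp
    ring
  | succ k ih =>
    intro x hx
    rw [iteratedDeriv_succ]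
    have h := (pgS_deriv (k + 2) (by omega) x hx).const_mul ((-1) ^ k * ((k + 1).factorial : ℝ))
    have h' := h.congr_of_eventuallyEq
      (f₁ := iteratedDeriv (k + 2) (fun x => Real.log (Real.Gamma x))) (by
        filter_upwards [lt_mem_nhds hx] with z hz using ih z hz)
    rw [h'.deriv, Nat.factorial_succ (k + 1)]
    push_cast
    ring

open Filter Topology in
lemma pgS_le (j : ℕ) (a : ℝ) (ha : 0 < a) :
    pgS (j + 2) a ≤ (a ^ (j + 2))⁻¹ + (a ^ (j + 1))⁻¹ := by
  have hs := pg_summable (j + 2) (by omega) a ha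
  rw [pgS, hs.tsum_eq_zero_add]
  have h1 : ∀ N : ℕ, ∑ n ∈ Finset.range N, ((a + ((n + 1 : ℕ) : ℝ)) ^ (j + 2))⁻¹
      ≤ (a ^ j)⁻¹ * (a⁻¹ - (a + N)⁻¹) := by
    intro N
    induction N with
    | zero => simp
    | succ N ih =>
      rw [Finset.sum_range_succ]
      have hp : 0 < a + N := by positivity
      have e : (a + (N:ℝ))⁻¹ - (a + (N + 1))⁻¹ = ((a + N) * (a + (N + 1)))⁻¹ := by
        field_simp; ring
      have : ((a + ((N + 1 : ℕ) : ℝ)) ^ (j + 2))⁻¹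
          ≤ (a ^ j)⁻¹ * ((a + N)⁻¹ - (a + ((N + 1 : ℕ) : ℝ))⁻¹) := by
        push_cast
        rw [e, ← mul_inv, pow_add]
        have hq : a ^ j ≤ (a + (N + 1)) ^ j := by gcongr; linarith
        gcongr
        nlinarith
      calc _ ≤ _ := add_le_add ih this
        _ = _ := by ring
  have h2 : ∑' n : ℕ, ((a + ((n + 1 : ℕ) : ℝ)) ^ (j + 2))⁻¹ ≤ (a ^ (j + 1))⁻¹ := by
    refine Real.tsum_le_of_sum_range_le (fun n => by positivity) fun N => (h1 N).trans ?_
    have hp : 0 < (a + N)⁻¹ := by positivity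
    rw [pow_succ, mul_inv]
    gcongr
    linarith
  simp only [Nat.cast_zero, add_zero]
  linarith

lemma pgS_nonneg (j : ℕ) (a : ℝ) (ha : 0 < a) : 0 ≤ pgS j a :=
  tsum_nonneg fun n => by positivity

lemma pgS_anti (j : ℕ) (hj : 2 ≤ j) (a b : ℝ) (ha : 0 < a) (hb : 0 < b) :
    pgS j (a + b) ≤ pgS j a := by
  refine Summable.tsum_le_tsum (fun n => ?_) (pg_summable j hj _ (by positivity))
    (pg_summable j hj _ ha)
  gcongr
  linarith

lemma pgS_lip (j : ℕ) (hj : 2 ≤ j) (a b : ℝ) (ha : 0 < a) (hb : 0 < b) :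
    pgS j a - pgS j (a + b) ≤ j * b * pgS (j + 1) a := by
  have h1 := pg_summable j hj a ha
  have h2 := pg_summable j hj (a + b) (by positivity)
  have h3 := (pg_summable (j + 1) (by omega) a ha).mul_left (j * b)
  unfold pgS
  rw [← h1.tsum_sub h2, ← tsum_mul_left]
  refine Summable.tsum_le_tsum (fun n => ?_) (h1.sub h2) h3
  have hx : 0 < a + n := by positivity
  have e : a + b + n = (a + n) + b := by ring
  rw [e]
  generalize a + (n:ℝ) = x at hx
  have hle : b / (x + b) ≤ 1 := (div_le_one (by positivity)).2 (by linarith)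
  have hb1 := one_add_mul_le_pow (a := -(b / (x + b))) (by linarith) j
  have e2 : 1 + -(b / (x + b)) = x / (x + b) := by field_simp; ring
  have h4 : b / (x + b) ≤ b / x := by gcongr; linarith
  have h5 : 1 - j * (b / x) ≤ (x / (x + b)) ^ j := by
    rw [← e2]
    have : j * (b / (x + b)) ≤ j * (b / x) := by gcongr
    linarith
  rw [div_pow] at h5
  have h6 : 0 < (x ^ j)⁻¹ := by positivity
  have h7 := mul_le_mul_of_nonneg_left h5 h6.le
  have e3 : (x ^ j)⁻¹ * (x ^ j / (x + b) ^ j) = ((x + b) ^ j)⁻¹ := by field_simp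
  have e4 : (x ^ j)⁻¹ * (1 - j * (b / x)) = (x ^ j)⁻¹ - j * b * (x ^ (j + 1))⁻¹ := by
    field_simp
    ring
  rw [e3, e4] at h7
  linarith

theorem polygamma_diff_bound (k : ℕ) (hk : 1 ≤ k) (a b : ℝ) (ha : 0 < a) (hb : 0 < b) :
    |polygamma k a - polygamma k (a + b)| ≤
      ((k + 1).factorial : ℝ) * min a b / a ^ (k + 1) * (1 + 1 / a) := by
  obtain ⟨m, rfl⟩ : ∃ m, k = m + 1 := ⟨k - 1, by omega⟩
  have hab : 0 < a + b := by positivity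
  rw [polygamma, polygamma, iter_log_Gamma m a ha, iter_log_Gamma m (a + b) hab, ← mul_sub,
    abs_mul, abs_mul, abs_pow, abs_neg, abs_one, one_pow, one_mul, Nat.abs_cast,
    abs_of_nonneg (sub_nonneg.2 (pgS_anti (m + 2) (by omega) a b ha hb)),
    Nat.factorial_succ (m + 1)]
  have hf : (0:ℝ) < ((m + 1).factorial : ℝ) := by positivity
  push_cast
  generalize ((m + 1).factorial : ℝ) = F at hf
  rcases le_total a b with h | h
  · rw [min_eq_left h]
    have h1 := pgS_le m a ha
    have h2 := pgS_nonneg (m + 2) (a + b) hab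
    calc F * (pgS (m + 2) a - pgS (m + 2) (a + b))
        ≤ F * ((a ^ (m + 2))⁻¹ + (a ^ (m + 1))⁻¹) := by gcongr; linarith
      _ ≤ (((m:ℝ) + 1 + 1) * F) * ((a ^ (m + 2))⁻¹ + (a ^ (m + 1))⁻¹) := by
          gcongr
          have : (0:ℝ) ≤ m := by positivity
          nlinarith
      _ = _ := by field_simp; ring
  · rw [min_eq_right h]
    have h1 := pgS_le (m + 1) a ha
    have h2 := pgS_lip (m + 2) (by omega) a b ha hb
    push_cast at h2
    calc F * (pgS (m + 2) a - pgS (m + 2) (a + b))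
        ≤ F * (((m:ℝ) + 2) * b * ((a ^ (m + 1 + 2))⁻¹ + (a ^ (m + 1 + 1))⁻¹)) := by
          gcongr
          refine h2.trans ?_
          gcongr
      _ = _ := by field_simp; ring
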